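/- Over unordered unranked Σ-trees, MSO and the counting μ-calculus C_μ over the single binary relation ≺_ch (child) have precisely the same expressive power with respect to Boolean queries. -/

import Mathlib

/-!
An MSO sentence is turned into a bottom-up automaton whose states form a finite commutative
monoid: a node's state is a function of its label and the product of its children's states. The
monoid can be kept aperiodic. The only delicate step is a set quantifier, which replaces the monoid
`M` by its power set; this stays aperiodic because in a sufficiently long product of elements of `M`
some factor can be repeated without changing the product.

By aperiodicity, the state of a node depends only on its label and on the number of children in each
state, counted up to a threshold, and this is what counting modalities express. So the sets of nodes
of a given state satisfy a system of equations in `C_μ`, which nested single fixed points solve; no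
care about least and greatest solutions is needed, since well-foundedness of the tree makes the
solution unique. In the other direction, a least fixed point is the intersection of all closed sets
and is expressed by a universal set quantifier.
-/

namespace UnrankedTrees

/-! ### Unranked trees: tree domains and ordered unranked Σ-trees.
Nodes are finite strings over ℕ; a tree domain is a finite prefix-closed set
of nodes such that `s ++ [i] ∈ D` implies `s ++ [j] ∈ D` for all `j < i`. -/

abbrev Node : Type := List ℕ

/-- An ordered unranked tree over alphabet `A`: a tree domain with a labeling. -/
structure UTree (A : Type) where
  dom : Finset Node
  nil_mem : ([] : Node) ∈ dom
  prefix_closed : ∀ ⦃s t : Node⦄, s ∈ dom → t <+: s → t ∈ dom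
  sib_closed : ∀ ⦃s : Node⦄ ⦃i j : ℕ⦄, s ++ [i] ∈ dom → j < i → s ++ [j] ∈ dom
  label : Node → A

namespace UTree

variable {A : Type}

/-- The child relation `≺_ch`. -/
def childR (T : UTree A) (s t : Node) : Prop :=
  s ∈ T.dom ∧ t ∈ T.dom ∧ ∃ i : ℕ, t = s ++ [i]

/-- The descendant-or-self relation `≺*_ch` (the prefix relation). -/
def descR (T : UTree A) (s t : Node) : Prop :=
  s ∈ T.dom ∧ t ∈ T.dom ∧ s <+: t

/-- The next-sibling relation `≺_ns`. -/
def nsR (T : UTree A) (s t : Node) : Prop :=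
  s ∈ T.dom ∧ t ∈ T.dom ∧ ∃ (u : Node) (i : ℕ), s = u ++ [i] ∧ t = u ++ [i + 1]

/-- The sibling ordering `≺*_ns` (reflexive-transitive closure of next-sibling). -/
def sibR (T : UTree A) (s t : Node) : Prop :=
  s ∈ T.dom ∧ t ∈ T.dom ∧ ∃ (u : Node) (i j : ℕ), s = u ++ [i] ∧ t = u ++ [j] ∧ i ≤ j

/-- The first-child relation `≺_fc`. -/
def firstChildR (T : UTree A) (s t : Node) : Prop :=
  s ∈ T.dom ∧ t ∈ T.dom ∧ t = s ++ [0]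

/-- The number of children of a node. -/
noncomputable def childCount (T : UTree A) (s : Node) : ℕ :=
  Set.ncard {i : ℕ | s ++ [i] ∈ T.dom}

/-- The list of children of a node `s`, in sibling order: `s·0, …, s·(n-1)`. -/
noncomputable def childrenList (T : UTree A) (s : Node) : List Node :=
  (List.range (T.childCount s)).map fun i => s ++ [i]

/-- `s` is a leaf of `T`. -/
def isLeaf (T : UTree A) (s : Node) : Prop :=
  s ∈ T.dom ∧ ∀ i : ℕ, s ++ [i] ∉ T.dom

/-- `s` has no next sibling in `T` (the root also counts as "last"). -/
def isLast (T : UTree A) (s : Node) : Prop :=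
  s = [] ∨ ∃ (u : Node) (i : ℕ), s = u ++ [i] ∧ u ++ [i + 1] ∉ T.dom

end UTree

/-! ### MSO over *unordered* unranked trees (no sibling order in the
vocabulary: atoms are x = y, x ≺*_ch y, P_a(x), X(x)). -/

inductive MSOu (A : Type) : Type where
  | eq : ℕ → ℕ → MSOu A
  | desc : ℕ → ℕ → MSOu A
  | lab : A → ℕ → MSOu A
  | mem : ℕ → ℕ → MSOu A
  | not : MSOu A → MSOu A
  | and : MSOu A → MSOu A → MSOu A
  | exFO : ℕ → MSOu A → MSOu A
  | exSO : ℕ → MSOu A → MSOu A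

namespace MSOu

variable {A : Type}

def Sat (T : UTree A) (v : ℕ → Node) (V : ℕ → Set Node) : MSOu A → Prop
  | .eq x y => v x = v y
  | .desc x y => T.descR (v x) (v y)
  | .lab a x => v x ∈ T.dom ∧ T.label (v x) = a
  | .mem X x => v x ∈ V X
  | .not φ => ¬ Sat T v V φ
  | .and φ ψ => Sat T v V φ ∧ Sat T v V ψ
  | .exFO n φ => ∃ s ∈ T.dom, Sat T (Function.update v n s) V φ
  | .exSO n φ => ∃ S : Set Node, S ⊆ ↑T.dom ∧ Sat T v (Function.update V n S) φ

def DefinesB (φ : MSOu A) (L : Set (UTree A)) : Prop :=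
  ∀ (T : UTree A) (v : ℕ → Node) (V : ℕ → Set Node), T ∈ L ↔ Sat T v V φ

def DefinesU (φ : MSOu A) (Q : UTree A → Set Node) : Prop :=
  ∀ (T : UTree A) (v : ℕ → Node) (V : ℕ → Set Node) (s : Node), s ∈ T.dom →
    (s ∈ Q T ↔ Sat T (Function.update v 0 s) V φ)

end MSOu

/-! ### The counting μ-calculus over the child relation. -/

inductive CMu (A : Type) : Type where
  | lab : A → CMu A
  | var : ℕ → CMu A
  | or : CMu A → CMu A → CMu A
  | not : CMu A → CMu A
  | dia : CMu A → CMu A                  -- ◇(≺_ch) φ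
  | diaGe : ℕ → CMu A → CMu A            -- ◇^{≥ k+1}(≺_ch) φ  (so k+1 ≥ 1)
  | mu : ℕ → CMu A → CMu A

namespace CMu

variable {A : Type}

def pol (n : ℕ) : CMu A → Bool → Prop
  | .lab _, _ => True
  | .var k, b => b = true ∨ k ≠ n
  | .or φ ψ, b => pol n φ b ∧ pol n ψ b
  | .not φ, b => pol n φ (!b)
  | .dia φ, b => pol n φ b
  | .diaGe _ φ, b => pol n φ b
  | .mu k φ, b => k = n ∨ pol n φ b

def WF : CMu A → Prop
  | .lab _ => True
  | .var _ => True
  | .or φ ψ => WF φ ∧ WF ψ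
  | .not φ => WF φ
  | .dia φ => WF φ
  | .diaGe _ φ => WF φ
  | .mu k φ => pol k φ true ∧ WF φ

/-- Semantics; `◇^{≥k}φ` holds at `s` iff there are at least `k` distinct
children of `s` satisfying `φ`. -/
def sem (T : UTree A) (V : ℕ → Set Node) : CMu A → Set Node
  | .lab a => {s | s ∈ T.dom ∧ T.label s = a}
  | .var n => V n
  | .or φ ψ => sem T V φ ∪ sem T V ψ
  | .not φ => {s | s ∈ T.dom ∧ s ∉ sem T V φ}
  | .dia φ => {s | s ∈ T.dom ∧ ∃ t : Node, T.childR s t ∧ t ∈ sem T V φ}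
  | .diaGe k φ =>
      {s | s ∈ T.dom ∧ k + 1 ≤ Set.ncard {t : Node | T.childR s t ∧ t ∈ sem T V φ}}
  | .mu n φ =>
      {s | ∀ P : Set Node, sem T (Function.update V n P) φ ⊆ P → s ∈ P}

end CMu

/-! ### Aperiodic monoids -/

section AperiodicMonoids

open scoped Pointwise

variable {M N ι : Type*}

/-- A monoid is aperiodic if the powers of each of its elements are eventually constant. For the
finite monoids recognizing sets of trees this says that a power only depends on the exponent up to
a threshold, which is all that the modalities `◇^{≥k}` can observe. -/
def IsAperiodic (M : Type*) [Monoid M] : Prop :=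
  ∀ m : M, ∃ n : ℕ, m ^ (n + 1) = m ^ n

theorem pow_eq_pow_of_pow_succ_eq [Monoid M] {m : M} {n k : ℕ} (h : m ^ (n + 1) = m ^ n)
    (hk : n ≤ k) : m ^ k = m ^ n := by
  induction hk with
  | refl => rfl
  | step _ ih => rw [pow_succ, ih, ← pow_succ, h]

theorem pow_min_eq_pow [Monoid M] {m : M} {n : ℕ} (h : m ^ (n + 1) = m ^ n) (k : ℕ) :
    m ^ min k n = m ^ k := by
  obtain hk | hk := le_total k n
  · rw [min_eq_left hk]
  · rw [min_eq_right hk, pow_eq_pow_of_pow_succ_eq h hk]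

theorem IsAperiodic.exists_threshold [Monoid M] [Finite M] (hM : IsAperiodic M) :
    ∃ n : ℕ, ∀ m : M, m ^ (n + 1) = m ^ n := by
  have := Fintype.ofFinite M
  choose n hn using hM
  refine ⟨Finset.univ.sup n, fun m => ?_⟩
  have hle : n m ≤ Finset.univ.sup n := Finset.le_sup (Finset.mem_univ m)
  rw [pow_eq_pow_of_pow_succ_eq (hn m) hle,
    pow_eq_pow_of_pow_succ_eq (hn m) (hle.trans (Nat.le_succ _))]

theorem IsAperiodic.prod [Monoid M] [Monoid N] (hM : IsAperiodic M) (hN : IsAperiodic N) :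
    IsAperiodic (M × N) := by
  rintro ⟨a, b⟩
  obtain ⟨k, hk⟩ := hM a
  obtain ⟨l, hl⟩ := hN b
  have ha := pow_eq_pow_of_pow_succ_eq hk (le_max_left k l)
  have ha' := pow_eq_pow_of_pow_succ_eq hk ((le_max_left k l).trans (Nat.le_succ _))
  have hb := pow_eq_pow_of_pow_succ_eq hl (le_max_right k l)
  have hb' := pow_eq_pow_of_pow_succ_eq hl ((le_max_right k l).trans (Nat.le_succ _))
  exact ⟨max k l, by rw [Prod.pow_mk, Prod.pow_mk, ha, ha', hb, hb']⟩

theorem exists_mul_prod_eq_prod [CommMonoid M] [Finite M] {n : ℕ}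
    (hn : ∀ m : M, m ^ (n + 1) = m ^ n) {s : Finset ι} (f : ι → M)
    (hs : Nat.card M * n < s.card) : ∃ i ∈ s, f i * ∏ j ∈ s, f j = ∏ j ∈ s, f j := by
  classical
  have := Fintype.ofFinite M
  rw [Nat.card_eq_fintype_card] at hs
  obtain ⟨m, -, hm⟩ := Finset.exists_lt_card_fiber_of_mul_lt_card_of_maps_to
    (f := f) (t := Finset.univ) (fun _ _ => Finset.mem_univ _) hs
  have hpow : ∏ j ∈ s with f j = m, f j = m ^ (s.filter (f · = m)).card :=
    Finset.prod_eq_pow_card fun j hj => (Finset.mem_filter.1 hj).2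
  obtain ⟨i, hi⟩ := Finset.card_pos.1 (Nat.zero_lt_of_lt hm)
  obtain ⟨his, rfl⟩ := Finset.mem_filter.1 hi
  refine ⟨i, his, ?_⟩
  rw [← Finset.prod_filter_mul_prod_filter_not s (f · = f i), hpow, ← mul_assoc, ← pow_succ',
    pow_eq_pow_of_pow_succ_eq (hn _) hm.le,
    pow_eq_pow_of_pow_succ_eq (hn _) (hm.le.trans (Nat.le_succ _))]

theorem mem_pow_iff_exists_prod_range [CommMonoid M] {S : Set M} {k : ℕ} {x : M} :
    x ∈ S ^ k ↔ ∃ g : ℕ → M, (∀ i ∈ Finset.range k, g i ∈ S) ∧ ∏ i ∈ Finset.range k, g i = x := by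
  conv_lhs => rw [← Finset.card_range k, ← Finset.prod_const, Set.mem_finsetProd]
  simp only [exists_prop]

theorem IsAperiodic.set [CommMonoid M] [Finite M] (hM : IsAperiodic M) : IsAperiodic (Set M) := by
  intro S
  obtain ⟨n, hn⟩ := hM.exists_threshold
  set k₀ := Nat.card M * n + 1
  -- In a long product of elements of `S` some factor can be repeated without changing the product.
  have hmono : Monotone fun k => S ^ (k₀ + k) := by
    refine monotone_nat_of_le_succ fun k x hx => ?_
    obtain ⟨g, hg, rfl⟩ := mem_pow_iff_exists_prod_range.1 hx
    have hlt : Nat.card M * n < (Finset.range (k₀ + k)).card := by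
      rw [Finset.card_range]
      omega
    obtain ⟨i, hi, habs⟩ := exists_mul_prod_eq_prod hn g hlt
    rw [← habs, ← add_assoc, pow_succ']
    exact Set.mul_mem_mul (hg i hi) hx
  obtain ⟨k, hk⟩ := WellFoundedGT.monotone_chain_condition ⟨_, hmono⟩
  exact ⟨k₀ + k, (hk (k + 1) (Nat.le_succ k)).symm⟩

theorem prod_eq_prod_pow_min_card [CommMonoid M] [Fintype M] [DecidableEq M] {n : ℕ}
    (hn : ∀ m : M, m ^ (n + 1) = m ^ n) (s : Finset ι) (f : ι → M) :
    ∏ i ∈ s, f i = ∏ m : M, m ^ min (s.filter (f · = m)).card n := by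
  rw [← Finset.prod_fiberwise s f f]
  refine Finset.prod_congr rfl fun m _ => ?_
  rw [pow_min_eq_pow (hn m)]
  exact Finset.prod_eq_pow_card fun i hi => (Finset.mem_filter.1 hi).2

end AperiodicMonoids

/-! ### Subtrees and relabelings -/

namespace UTree

variable {A B : Type} {T : UTree A} {s t u : Node}

open Classical in
/-- The children of a node, as a finite set. -/
noncomputable def children (T : UTree A) (s : Node) : Finset Node :=
  T.dom.filter (T.childR s)

/-- The nodes of the subtree rooted at `s`. -/
def subtree (T : UTree A) (s : Node) : Set Node :=
  {u | T.descR s u}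

theorem mem_children : t ∈ T.children s ↔ T.childR s t := by
  simp only [children, Finset.mem_filter, and_iff_right_iff_imp]
  exact fun h => h.2.1

theorem mem_dom_of_mem_children (ht : t ∈ T.children s) : t ∈ T.dom :=
  (mem_children.1 ht).2.1

theorem mem_dom_of_mem_subtree (hu : u ∈ T.subtree s) : u ∈ T.dom :=
  hu.2.1

theorem self_mem_subtree (hs : s ∈ T.dom) : s ∈ T.subtree s :=
  ⟨hs, hs, List.prefix_rfl⟩

theorem mem_subtree_nil : u ∈ T.subtree [] ↔ u ∈ T.dom :=
  ⟨fun h => h.2.1, fun h => ⟨T.nil_mem, h, List.nil_prefix⟩⟩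

theorem mem_subtree_iff (hs : s ∈ T.dom) :
    u ∈ T.subtree s ↔ u = s ∨ ∃ t ∈ T.children s, u ∈ T.subtree t := by
  constructor
  · rintro ⟨-, hu, l, rfl⟩
    obtain - | ⟨i, l⟩ := l
    · exact Or.inl (List.append_nil s)
    · have hpre : s ++ [i] <+: s ++ i :: l := ⟨l, by simp⟩
      have hi : s ++ [i] ∈ T.dom := T.prefix_closed hu hpre
      exact Or.inr ⟨s ++ [i], mem_children.2 ⟨hs, hi, i, rfl⟩, hi, hu, hpre⟩
  · rintro (rfl | ⟨t, ht, -, hu, htu⟩)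
    · exact self_mem_subtree hs
    · obtain ⟨-, -, i, rfl⟩ := mem_children.1 ht
      exact ⟨hs, hu, (List.prefix_append s [i]).trans htu⟩

theorem subtree_subset_of_mem_children (ht : t ∈ T.children s) : T.subtree t ⊆ T.subtree s :=
  fun _ hu => (mem_subtree_iff (mem_children.1 ht).1).2 (Or.inr ⟨t, ht, hu⟩)

theorem subtree_trans (ht : t ∈ T.subtree s) : T.subtree t ⊆ T.subtree s :=
  fun _ hu => ⟨ht.1, hu.2.1, ht.2.2.trans hu.2.2⟩

theorem take_eq_of_mem_subtree (ht : t ∈ T.children s) (hu : u ∈ T.subtree t) :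
    u.take (s.length + 1) = t := by
  obtain ⟨-, -, i, rfl⟩ := mem_children.1 ht
  simpa using (List.prefix_iff_eq_take.1 hu.2.2).symm

theorem ne_of_mem_subtree (ht : t ∈ T.children s) (hu : u ∈ T.subtree t) : u ≠ s := by
  obtain ⟨-, -, i, rfl⟩ := mem_children.1 ht
  rintro rfl
  simpa using hu.2.2.length_le

theorem wellFounded_children (T : UTree A) : WellFounded fun t s => t ∈ T.children s := by
  refine Subrelation.wf (r := InvImage (· < ·) fun s => T.dom.sup List.length - s.length) ?_
    (InvImage.wf _ wellFounded_lt)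
  intro t s ht
  obtain ⟨-, hdom, i, rfl⟩ := mem_children.1 ht
  have hle := Finset.le_sup (f := List.length) hdom
  simp only [InvImage, List.length_append, List.length_singleton] at hle ⊢
  omega

theorem children_induction {P : Node → Prop}
    (h : ∀ s ∈ T.dom, (∀ t ∈ T.children s, P t) → P s) : ∀ s ∈ T.dom, P s :=
  T.wellFounded_children.fix fun s ih hs =>
    h s hs fun t ht => ih t ht (mem_dom_of_mem_children ht)

theorem subtree_induction {P : Node → Prop}
    (h : ∀ s ∈ T.dom, (∀ t ∈ T.children s, ∀ u ∈ T.subtree t, P u) → P s) :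
    ∀ s ∈ T.dom, P s := by
  suffices ∀ s ∈ T.dom, ∀ u ∈ T.subtree s, P u from
    fun s hs => this s hs s (self_mem_subtree hs)
  refine children_induction fun s hs ih u hu => ?_
  obtain rfl | ⟨t, ht, hu⟩ := (mem_subtree_iff hs).1 hu
  · exact h u hs ih
  · exact ih t ht u hu

open Classical in
theorem exists_set_eq_on_subtrees (hs : s ∈ T.dom) (p : Prop) (S : Node → Set Node) :
    ∃ R : Set Node, R ⊆ T.dom ∧ (s ∈ R ↔ p) ∧
      ∀ t ∈ T.children s, ∀ u ∈ T.subtree t, u ∈ R ↔ u ∈ S t := by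
  refine ⟨{u | u ∈ T.dom ∧ if u = s then p else u ∈ S (u.take (s.length + 1))},
    fun u hu => hu.1, ?_, fun t ht u hu => ?_⟩
  · simp [hs]
  · simp [mem_dom_of_mem_subtree hu, ne_of_mem_subtree ht hu, take_eq_of_mem_subtree ht hu]

/-- The tree with the same nodes as `T` and labels `ℓ`. -/
def relabel (T : UTree A) (ℓ : Node → B) : UTree B where
  dom := T.dom
  nil_mem := T.nil_mem
  prefix_closed := T.prefix_closed
  sib_closed := T.sib_closed
  label := ℓ

/-- Application of `f` to all labels of a tree. -/
def map (f : A → B) (T : UTree A) : UTree B :=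
  T.relabel fun u => f (T.label u)

/-- The tree whose label at `u` is computed by `g` from the label of `T` and the truth value of
`u ∈ S`; this is how the value of a set variable is recorded in the alphabet. -/
def mark (g : A → Prop → B) (S : Set Node) (T : UTree A) : UTree B :=
  T.relabel fun u => g (T.label u) (u ∈ S)

end UTree

/-! ### Recognizable sets of trees -/

namespace UTree

open scoped Pointwise

variable {A B : Type} {M N : Type*} [CommMonoid M] [CommMonoid N] {T : UTree A} {s : Node}

/-- The run of a bottom-up automaton: the state of a node is determined by its label and the
product of the states of its children. -/
noncomputable def run (δ : A → M → M) (T : UTree A) : Node → M :=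
  T.wellFounded_children.fix fun s r => δ (T.label s) (∏ t : T.children s, r t t.2)

theorem run_eq (δ : A → M → M) (T : UTree A) (s : Node) :
    T.run δ s = δ (T.label s) (∏ t ∈ T.children s, T.run δ t) := by
  rw [run, WellFounded.fix_eq]
  exact congrArg (δ _) (Finset.prod_coe_sort _ (T.run δ))

theorem eq_run {δ : A → M → M} {f : Node → M}
    (hf : ∀ s ∈ T.dom, f s = δ (T.label s) (∏ t ∈ T.children s, f t)) :
    ∀ s ∈ T.dom, f s = T.run δ s :=
  children_induction fun s hs ih => by
    rw [hf s hs, run_eq, Finset.prod_congr rfl ih]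

theorem run_relabel_congr {δ : B → M → M} {ℓ ℓ' : Node → B} :
    ∀ s ∈ T.dom, (∀ u ∈ T.subtree s, ℓ u = ℓ' u) →
      (T.relabel ℓ).run δ s = (T.relabel ℓ').run δ s :=
  children_induction fun s hs ih h => by
    have hprod : ∏ t ∈ T.children s, (T.relabel ℓ).run δ t =
        ∏ t ∈ T.children s, (T.relabel ℓ').run δ t :=
      Finset.prod_congr rfl fun t ht =>
        ih t ht fun u hu => h u (subtree_subset_of_mem_children ht hu)
    rw [run_eq, run_eq]
    exact congrArg₂ δ (h s (self_mem_subtree hs)) hprod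

theorem run_map (f : A → B) (δ : B → M → M) (hs : s ∈ T.dom) :
    (T.map f).run δ s = T.run (fun a => δ (f a)) s :=
  eq_run (fun s _ => run_eq δ (T.map f) s) s hs

theorem run_prod (δ : A → M → M) (ε : A → N → N) (hs : s ∈ T.dom) :
    T.run (fun a m => (δ a m.1, ε a m.2)) s = (T.run δ s, T.run ε s) := by
  refine (eq_run (f := fun s => (T.run δ s, T.run ε s)) (fun s _ => ?_) s hs).symm
  simp only [Prod.fst_prod, Prod.snd_prod, ← run_eq]

/-- The transition function of the subset construction guessing a set of marked nodes. -/
def powersetStep (g : A → Prop → B) (δ : B → M → M) (a : A) (X : Set M) : Set M :=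
  ⋃ p : Prop, δ (g a p) '' X

theorem run_powersetStep (g : A → Prop → B) (δ : B → M → M) (hs : s ∈ T.dom) :
    T.run (powersetStep g δ) s =
      (fun S => (T.mark g S).run δ s) '' {S | S ⊆ T.dom} := by
  refine (eq_run (f := fun s => (fun S => (T.mark g S).run δ s) '' {S | S ⊆ T.dom})
    (fun s hs => ?_) s hs).symm
  ext m
  simp only [powersetStep, Set.mem_iUnion, Set.mem_image, Set.mem_finsetProd]
  constructor
  · rintro ⟨S, hS, rfl⟩
    exact ⟨s ∈ S, _, ⟨_, fun _ => ⟨S, hS, rfl⟩, rfl⟩, (run_eq δ (T.mark g S) s).symm⟩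
  · rintro ⟨p, _, ⟨x, hx, rfl⟩, rfl⟩
    choose! S _ hx using fun t (ht : t ∈ T.children s) => hx ht
    obtain ⟨R, hR, hRs, hRt⟩ := exists_set_eq_on_subtrees hs p S
    have hprod : ∏ t ∈ T.children s, (T.mark g R).run δ t = ∏ t ∈ T.children s, x t :=
      Finset.prod_congr rfl fun t ht => by
        rw [← hx t ht]
        exact run_relabel_congr t (mem_dom_of_mem_children ht) fun u hu => by
          rw [hRt t ht u hu]
    refine ⟨R, hR, ?_⟩
    rw [run_eq]
    exact congrArg₂ δ (congrArg (g (T.label s)) (propext hRs)) hprod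

open Classical in
/-- The truth value of a proposition in `ZMod 2`, whose multiplication is conjunction. -/
noncomputable def truthValue (P : Prop) : ZMod 2 :=
  if P then 1 else 0

theorem truthValue_eq_one {P : Prop} : truthValue P = 1 ↔ P := by
  simp [truthValue]

theorem truthValue_and (P Q : Prop) : truthValue (P ∧ Q) = truthValue P * truthValue Q := by
  by_cases P <;> by_cases Q <;> simp [truthValue, *]

theorem truthValue_forall_mem {ι : Type*} (s : Finset ι) (P : ι → Prop) :
    truthValue (∀ i ∈ s, P i) = ∏ i ∈ s, truthValue (P i) := by
  simp [truthValue, Finset.prod_ite_zero]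

theorem truthValue_forall_mem_subtree (hs : s ∈ T.dom) (P : Node → Prop) :
    truthValue (∀ u ∈ T.subtree s, P u) =
      truthValue (P s) * ∏ t ∈ T.children s, truthValue (∀ u ∈ T.subtree t, P u) := by
  rw [← truthValue_forall_mem, ← truthValue_and]
  congr 1
  simp only [mem_subtree_iff hs]
  grind

/-- The transition function of the automaton searching for a `p`-node with a `q`-descendant: the
second component of a state says that the subtree has no `q`-node, the first that it has no
`p`-node with a `q`-descendant. -/
noncomputable def descStep (p q : A → Prop) (a : A) (m : ZMod 2 × ZMod 2) : ZMod 2 × ZMod 2 :=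
  (truthValue (p a → truthValue (¬ q a) * m.2 = 1) * m.1, truthValue (¬ q a) * m.2)

theorem run_descStep (p q : A → Prop) (hs : s ∈ T.dom) :
    T.run (descStep p q) s =
      (truthValue (∀ u ∈ T.subtree s, p (T.label u) → ∀ v ∈ T.subtree u, ¬ q (T.label v)),
        truthValue (∀ v ∈ T.subtree s, ¬ q (T.label v))) := by
  refine (eq_run (f := fun s =>
    (truthValue (∀ u ∈ T.subtree s, p (T.label u) → ∀ v ∈ T.subtree u, ¬ q (T.label v)),
      truthValue (∀ v ∈ T.subtree s, ¬ q (T.label v)))) (fun s hs => ?_) s hs).symm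
  simp only [descStep, Prod.fst_prod, Prod.snd_prod]
  rw [← truthValue_forall_mem_subtree hs fun v => ¬ q (T.label v), truthValue_eq_one,
    ← truthValue_forall_mem_subtree hs fun u =>
      p (T.label u) → ∀ v ∈ T.subtree u, ¬ q (T.label v)]

end UTree

open UTree

/-- A set of trees is recognizable if it is accepted by a bottom-up automaton whose states form a
finite aperiodic commutative monoid. Aperiodicity reflects that MSO formulas cannot count modulo
an integer when siblings are unordered. -/
def Recognizable {A : Type} (L : Set (UTree A)) : Prop :=
  ∃ (M : Type) (_ : CommMonoid M) (_ : Finite M) (δ : A → M → M) (F : Set M),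
    IsAperiodic M ∧ ∀ T : UTree A, T ∈ L ↔ T.run δ [] ∈ F

namespace Recognizable

variable {A B : Type}

theorem compl {L : Set (UTree A)} (hL : Recognizable L) : Recognizable Lᶜ := by
  obtain ⟨M, _, _, δ, F, hM, hF⟩ := hL
  exact ⟨M, _, ‹_›, δ, Fᶜ, hM, fun T => not_congr (hF T)⟩

theorem inter {L L' : Set (UTree A)} (hL : Recognizable L) (hL' : Recognizable L') :
    Recognizable (L ∩ L') := by
  obtain ⟨M, _, _, δ, F, hM, hF⟩ := hL
  obtain ⟨M', _, _, δ', F', hM', hF'⟩ := hL'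
  refine ⟨M × M', _, inferInstance, fun a m => (δ a m.1, δ' a m.2), F ×ˢ F', hM.prod hM',
    fun T => ?_⟩
  rw [run_prod δ δ' T.nil_mem, Set.prodMk_mem_set_prod_eq, ← hF, ← hF', Set.mem_inter_iff]

theorem preimage_map {L : Set (UTree B)} (hL : Recognizable L) (f : A → B) :
    Recognizable (UTree.map f ⁻¹' L) := by
  obtain ⟨M, _, _, δ, F, hM, hF⟩ := hL
  refine ⟨M, _, ‹_›, fun a => δ (f a), F, hM, fun T => ?_⟩
  rw [Set.mem_preimage, hF, run_map f δ T.nil_mem]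

open scoped Pointwise in
theorem exists_set {L : Set (UTree B)} (hL : Recognizable L) (g : A → Prop → B) :
    Recognizable {T : UTree A | ∃ S : Set Node, S ⊆ T.dom ∧ T.mark g S ∈ L} := by
  obtain ⟨M, _, _, δ, F, hM, hF⟩ := hL
  refine ⟨Set M, _, inferInstance, powersetStep g δ, {X | (X ∩ F).Nonempty}, hM.set, fun T => ?_⟩
  simp only [run_powersetStep g δ T.nil_mem, Set.mem_ofPred_eq, hF, Set.Nonempty, Set.mem_inter_iff,
    Set.mem_image]
  constructor
  · rintro ⟨S, hS, hmem⟩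
    exact ⟨_, ⟨S, hS, rfl⟩, hmem⟩
  · rintro ⟨_, ⟨S, hS, rfl⟩, hmem⟩
    exact ⟨S, hS, hmem⟩

theorem exists_desc (p q : A → Prop) :
    Recognizable {T : UTree A | ∃ s t, T.descR s t ∧ p (T.label s) ∧ q (T.label t)} := by
  have hidem : ∀ m : ZMod 2 × ZMod 2, m ^ 2 = m ^ 1 := by decide
  refine ⟨ZMod 2 × ZMod 2, inferInstance, inferInstance, descStep p q, {m | m.1 ≠ 1},
    fun m => ⟨1, hidem m⟩, fun T => ?_⟩
  rw [run_descStep p q T.nil_mem, Set.mem_ofPred_eq, Set.mem_ofPred_eq, ne_eq, truthValue_eq_one]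
  push Not
  constructor
  · rintro ⟨s, t, hst, hs, ht⟩
    exact ⟨s, mem_subtree_nil.2 hst.1, hs, t, hst, ht⟩
  · rintro ⟨s, -, hs, t, hst, ht⟩
    exact ⟨s, t, hst, hs, ht⟩

theorem exists_node (p : A → Prop) :
    Recognizable {T : UTree A | ∃ s ∈ T.dom, p (T.label s)} := by
  convert exists_desc p fun _ => True using 3 with T
  constructor
  · rintro ⟨s, hs, hp⟩
    exact ⟨s, s, ⟨hs, hs, List.prefix_rfl⟩, hp, trivial⟩
  · rintro ⟨s, t, hst, hp, -⟩
    exact ⟨s, hst.1, hp⟩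

/-- A `p`-node is unique if no set of nodes separates two `p`-nodes. -/
theorem existsUnique_node (p : A → Prop) :
    Recognizable {T : UTree A | ∃! s, s ∈ T.dom ∧ p (T.label s)} := by
  have hsep := ((exists_node fun b : A × Prop => p b.1 ∧ b.2).inter
    (exists_node fun b : A × Prop => p b.1 ∧ ¬ b.2)).exists_set Prod.mk
  convert (exists_node p).inter hsep.compl using 1
  ext T
  constructor
  · rintro ⟨s, hs, huniq⟩
    refine ⟨⟨s, hs⟩, ?_⟩
    rintro ⟨S, -, ⟨t, ht, hpt, htS⟩, u, hu, hpu, huS⟩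
    exact huS ((huniq u ⟨hu, hpu⟩).trans (huniq t ⟨ht, hpt⟩).symm ▸ htS)
  · rintro ⟨⟨s, hs, hps⟩, hnot⟩
    refine ⟨s, ⟨hs, hps⟩, fun t ⟨ht, hpt⟩ => by_contra fun hts => hnot ?_⟩
    exact ⟨{s}, by simpa using hs, ⟨s, hs, hps, rfl⟩, t, ht, hpt, hts⟩

theorem exists_mark {L : Set (UTree B)} (hL : Recognizable L) (g : A → Prop → B) :
    Recognizable {T : UTree A | ∃ s ∈ T.dom, T.mark g {s} ∈ L} := by
  have hset := ((existsUnique_node (Prod.snd : A × Prop → Prop)).inter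
    (hL.preimage_map fun b : A × Prop => g b.1 b.2)).exists_set Prod.mk
  convert hset using 3 with T
  constructor
  · rintro ⟨s, hs, hmem⟩
    exact ⟨{s}, by simpa using hs, ⟨s, ⟨hs, rfl⟩, fun t ht => ht.2⟩, hmem⟩
  · rintro ⟨S, hS, ⟨s, ⟨hs, hsS⟩, huniq⟩, hmem⟩
    have hSs : S = {s} := Set.ext fun t =>
      ⟨fun ht => huniq t ⟨hS ht, ht⟩, fun ht => Set.mem_singleton_iff.1 ht ▸ hsS⟩
    exact ⟨s, hs, hSs ▸ hmem⟩

end Recognizable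

/-! ### Recognizability of MSO-definable sets -/

section MSOToRecognizable

variable {A : Type} {T : UTree A}

/-- The tree `T` with the values of all variables at a node recorded in its label. -/
def UTree.annotate (T : UTree A) (v : ℕ → Node) (V : ℕ → Set Node) :
    UTree (A × Set ℕ × Set ℕ) :=
  T.relabel fun u => (T.label u, {x | u = v x}, {X | u ∈ V X})

/-- The set `K` with the membership of `n` redefined as `p`. -/
def updateMem (K : Set ℕ) (n : ℕ) (p : Prop) : Set ℕ :=
  {x | Function.update (· ∈ K) n p x}

theorem annotate_update_node (v : ℕ → Node) (V : ℕ → Set Node) (n : ℕ) (s : Node) :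
    T.annotate (Function.update v n s) V =
      (T.annotate v V).mark (fun b p => (b.1, updateMem b.2.1 n p, b.2.2)) {s} := by
  refine congrArg T.relabel (funext fun u => ?_)
  have hmem : {x | u = Function.update v n s x} = updateMem {x | u = v x} n (u = s) :=
    Set.ext fun x => iff_of_eq (Function.apply_update (fun _ w => u = w) v n s x)
  rw [hmem]
  rfl

theorem annotate_update_set (v : ℕ → Node) (V : ℕ → Set Node) (n : ℕ) (S : Set Node) :
    T.annotate v (Function.update V n S) =
      (T.annotate v V).mark (fun b p => (b.1, b.2.1, updateMem b.2.2 n p)) S := by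
  refine congrArg T.relabel (funext fun u => ?_)
  have hmem : {X | u ∈ Function.update V n S X} = updateMem {X | u ∈ V X} n (u ∈ S) :=
    Set.ext fun X => iff_of_eq (Function.apply_update (fun _ W => u ∈ W) V n S X)
  rw [hmem]
  rfl

theorem MSOu.exists_recognizable (φ : MSOu A) :
    ∃ L : Set (UTree (A × Set ℕ × Set ℕ)), Recognizable L ∧
      ∀ (T : UTree A) (v : ℕ → Node) (V : ℕ → Set Node), (∀ x, v x ∈ T.dom) →
        (φ.Sat T v V ↔ T.annotate v V ∈ L) := by
  induction φ with
  | eq x y =>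
    refine ⟨_, .exists_node fun b => x ∈ b.2.1 ∧ y ∈ b.2.1, fun T v V hv => ?_⟩
    exact ⟨fun h => ⟨v x, hv x, rfl, h⟩, fun ⟨_, _, hx, hy⟩ => hx.symm.trans hy⟩
  | desc x y =>
    refine ⟨_, .exists_desc (fun b => x ∈ b.2.1) (fun b => y ∈ b.2.1), fun T v V _ => ?_⟩
    exact ⟨fun h => ⟨v x, v y, h, rfl, rfl⟩, by rintro ⟨_, _, h, rfl, rfl⟩; exact h⟩
  | lab a x =>
    refine ⟨_, .exists_node fun b => x ∈ b.2.1 ∧ b.1 = a, fun T v V _ => ?_⟩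
    exact ⟨fun h => ⟨v x, h.1, rfl, h.2⟩, by rintro ⟨_, h, rfl, ha⟩; exact ⟨h, ha⟩⟩
  | mem X x =>
    refine ⟨_, .exists_node fun b => x ∈ b.2.1 ∧ X ∈ b.2.2, fun T v V hv => ?_⟩
    exact ⟨fun h => ⟨v x, hv x, rfl, h⟩, by rintro ⟨_, _, rfl, h⟩; exact h⟩
  | not φ ih =>
    obtain ⟨L, hL, hφ⟩ := ih
    exact ⟨Lᶜ, hL.compl, fun T v V hv => not_congr (hφ T v V hv)⟩
  | and φ ψ ihφ ihψ =>
    obtain ⟨L, hL, hφ⟩ := ihφ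
    obtain ⟨L', hL', hψ⟩ := ihψ
    exact ⟨L ∩ L', hL.inter hL', fun T v V hv => and_congr (hφ T v V hv) (hψ T v V hv)⟩
  | exFO n φ ih =>
    obtain ⟨L, hL, hφ⟩ := ih
    refine ⟨_, hL.exists_mark fun b p => (b.1, updateMem b.2.1 n p, b.2.2), fun T v V hv => ?_⟩
    refine exists_congr fun s => and_congr_right fun hs => ?_
    rw [← annotate_update_node]
    exact hφ T _ V ((Function.forall_update_iff v fun _ w => w ∈ T.dom).2 ⟨hs, fun x _ => hv x⟩)
  | exSO n φ ih =>
    obtain ⟨L, hL, hφ⟩ := ih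
    refine ⟨_, hL.exists_set fun b p => (b.1, b.2.1, updateMem b.2.2 n p), fun T v V hv => ?_⟩
    refine exists_congr fun S => and_congr_right fun _ => ?_
    rw [← annotate_update_set]
    exact hφ T v _ hv

theorem MSOu.DefinesB.recognizable {φ : MSOu A} {L : Set (UTree A)} (hφ : φ.DefinesB L) :
    Recognizable L := by
  obtain ⟨L', hL', hsat⟩ := φ.exists_recognizable
  convert hL'.exists_mark fun (a : A) p => (a, {_x | p}, {_X | False}) using 1
  ext T
  have hmem : ∀ s ∈ T.dom, T ∈ L ↔ T.annotate (fun _ => s) (fun _ => ∅) ∈ L' := fun s hs =>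
    (hφ T _ _).trans (hsat T _ _ fun _ => hs)
  exact ⟨fun h => ⟨[], T.nil_mem, (hmem [] T.nil_mem).1 h⟩, fun ⟨s, hs, h⟩ => (hmem s hs).2 h⟩

end MSOToRecognizable

/-! ### Derived connectives of the counting μ-calculus -/

namespace CMu

variable {A : Type} {ι M : Type*} {T : UTree A} {V : ℕ → Set Node} {s : Node} {φ ψ : CMu A}

/-- Falsity, as the least fixed point of `X ↦ X`. -/
def bot : CMu A :=
  .mu 0 (.var 0)

/-- Conjunction. -/
def and (φ ψ : CMu A) : CMu A :=
  .not (.or (.not φ) (.not ψ))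

/-- Finite disjunction. -/
noncomputable def bigOr (I : Finset ι) (f : ι → CMu A) : CMu A :=
  (I.toList.map f).foldr .or bot

/-- Finite conjunction. -/
noncomputable def bigAnd (I : Finset ι) (f : ι → CMu A) : CMu A :=
  .not (bigOr I fun i => .not (f i))

theorem sem_bot : (bot : CMu A).sem T V = ∅ := by
  refine Set.eq_empty_of_forall_notMem fun s hs => ?_
  simpa [sem] using hs ∅

theorem mem_not (hs : s ∈ T.dom) : s ∈ (not φ).sem T V ↔ s ∉ φ.sem T V :=
  and_iff_right hs

theorem mem_and (hs : s ∈ T.dom) :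
    s ∈ (and φ ψ).sem T V ↔ s ∈ φ.sem T V ∧ s ∈ ψ.sem T V := by
  rw [and, mem_not hs, sem, Set.mem_union, mem_not hs, mem_not hs, not_or, not_not, not_not]

theorem mem_foldr_or {l : List (CMu A)} :
    s ∈ (l.foldr .or bot).sem T V ↔ ∃ φ ∈ l, s ∈ φ.sem T V := by
  induction l with
  | nil => simp [sem_bot]
  | cons φ l ih => simp only [List.foldr_cons, sem, Set.mem_union, ih, List.exists_mem_cons_iff]

theorem mem_bigOr {I : Finset ι} {f : ι → CMu A} :
    s ∈ (bigOr I f).sem T V ↔ ∃ i ∈ I, s ∈ (f i).sem T V := by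
  simp [bigOr, mem_foldr_or]

theorem mem_bigAnd {I : Finset ι} {f : ι → CMu A} (hs : s ∈ T.dom) :
    s ∈ (bigAnd I f).sem T V ↔ ∀ i ∈ I, s ∈ (f i).sem T V := by
  simp only [bigAnd, mem_not hs, mem_bigOr, not_exists, not_and, not_not]

theorem mem_diaGe {k : ℕ} {p : Node → Prop} [DecidablePred p] (hs : s ∈ T.dom)
    (hp : ∀ t ∈ T.children s, t ∈ φ.sem T V ↔ p t) :
    s ∈ (diaGe k φ).sem T V ↔ k < ((T.children s).filter p).card := by
  have hset : {t | T.childR s t ∧ t ∈ φ.sem T V} = ((T.children s).filter p : Set Node) := by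
    ext t
    rw [Finset.coe_filter, Set.mem_ofPred_eq, Set.mem_ofPred_eq, ← UTree.mem_children]
    exact and_congr_right (hp t)
  simp only [sem, Set.mem_ofPred_eq, hset, Set.ncard_coe_finset, hs, true_and]
  exact Nat.succ_le_iff

/-- The formula is well-formed and all free occurrences of variables in it are positive (for
`b = true`) or negative (for `b = false`). -/
def HasPolarity (φ : CMu A) (b : Bool) : Prop :=
  φ.WF ∧ ∀ n, pol n φ b

namespace HasPolarity

variable {b : Bool}

theorem lab (a : A) : HasPolarity (.lab a) b :=
  ⟨trivial, fun _ => trivial⟩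

theorem var (n : ℕ) : HasPolarity (.var n : CMu A) true :=
  ⟨trivial, fun _ => Or.inl rfl⟩

theorem or (hφ : HasPolarity φ b) (hψ : HasPolarity ψ b) : HasPolarity (.or φ ψ) b :=
  ⟨⟨hφ.1, hψ.1⟩, fun n => ⟨hφ.2 n, hψ.2 n⟩⟩

theorem not (hφ : HasPolarity φ (!b)) : HasPolarity (.not φ) b :=
  hφ

theorem diaGe (k : ℕ) (hφ : HasPolarity φ b) : HasPolarity (.diaGe k φ) b :=
  hφ

theorem mu (n : ℕ) (hφ : HasPolarity φ true) : HasPolarity (.mu n φ) true :=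
  ⟨⟨hφ.2 n, hφ.1⟩, fun m => Or.inr (hφ.2 m)⟩

theorem bot : HasPolarity (bot : CMu A) b :=
  ⟨⟨Or.inl rfl, trivial⟩, fun _ => or_iff_not_imp_left.2 Or.inr⟩

theorem not_not (hφ : HasPolarity φ b) : HasPolarity φ (!!b) :=
  (Bool.not_not b).symm ▸ hφ

theorem and (hφ : HasPolarity φ b) (hψ : HasPolarity ψ b) : HasPolarity (and φ ψ) b :=
  (hφ.not_not.not.or hψ.not_not.not).not

theorem bigOr {I : Finset ι} {f : ι → CMu A} (hf : ∀ i ∈ I, HasPolarity (f i) b) :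
    HasPolarity (bigOr I f) b := by
  rw [CMu.bigOr]
  refine List.foldrRecOn (motive := (HasPolarity · b)) _ _ bot fun ψ hψ φ hφ => ?_
  obtain ⟨i, hi, rfl⟩ := List.mem_map.1 hφ
  exact (hf i (Finset.mem_toList.1 hi)).or hψ

theorem bigAnd {I : Finset ι} {f : ι → CMu A} (hf : ∀ i ∈ I, HasPolarity (f i) b) :
    HasPolarity (bigAnd I f) b :=
  (bigOr fun i hi => (hf i hi).not_not.not).not

end HasPolarity

theorem sem_update_subset {n : ℕ} {b : Bool} {P Q : Set Node} (hφ : pol n φ b)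
    (hPQ : b = true → P ⊆ Q) (hQP : b = false → Q ⊆ P) :
    φ.sem T (Function.update V n P) ⊆ φ.sem T (Function.update V n Q) := by
  induction φ generalizing V b P Q with
  | lab a => exact subset_rfl
  | var k =>
    obtain rfl | hk := eq_or_ne k n
    · simpa [sem] using hPQ (hφ.resolve_right fun h => h rfl)
    · simp [sem, hk]
  | or φ ψ ihφ ihψ => exact Set.union_subset_union (ihφ hφ.1 hPQ hQP) (ihψ hφ.2 hPQ hQP)
  | not φ ih =>
    have := ih (V := V) hφ (P := Q) (Q := P) (by simpa using hQP) (by simpa using hPQ)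
    exact fun s hs => ⟨hs.1, fun h => hs.2 (this h)⟩
  | dia φ ih =>
    exact fun s ⟨hs, t, hst, ht⟩ => ⟨hs, t, hst, ih hφ hPQ hQP ht⟩
  | diaGe k φ ih =>
    refine fun s ⟨hs, hk⟩ => ⟨hs, hk.trans (Set.ncard_le_ncard ?_ ?_)⟩
    · exact fun t ht => ⟨ht.1, ih hφ hPQ hQP ht.2⟩
    · exact T.dom.finite_toSet.subset fun t ht => ht.1.2.1
  | mu k φ ih =>
    intro s hs R hR
    obtain rfl | hk := eq_or_ne k n
    · rw [Function.update_idem] at hR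
      exact hs R (by rwa [Function.update_idem])
    · rw [Function.update_comm hk.symm] at hR
      refine hs R ?_
      rw [Function.update_comm hk.symm]
      exact (ih (hφ.resolve_left hk) hPQ hQP).trans hR

theorem sem_mu_eq {n : ℕ} (hφ : pol n φ true) :
    (mu n φ).sem T V = φ.sem T (Function.update V n ((mu n φ).sem T V)) := by
  let F : Set Node →o Set Node :=
    ⟨fun P => φ.sem T (Function.update V n P),
      fun _ _ hPQ => sem_update_subset hφ (fun _ => hPQ) nofun⟩
  have hlfp : (mu n φ).sem T V = F.lfp := rfl
  rw [hlfp]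
  exact F.map_lfp.symm

/-! ### From recognizability to the counting μ-calculus -/

variable [Fintype M] [DecidableEq M]

/-- If `f r` defines the nodes of state `r`, this formula says that the number of children of
state `q`, truncated at `N`, is `c`. The upper bound is expressed by counting the children
satisfying no `f r` with `r ≠ q`, so that every `f r` occurs positively. -/
noncomputable def truncCount (N : ℕ) (f : M → CMu A) (q : M) (c : ℕ) : CMu A :=
  bigAnd (Finset.range N) fun k =>
    if k < c then .diaGe k (f q) else .not (.diaGe k (.not (bigOr (Finset.univ.erase q) f)))

theorem mem_truncCount {N c : ℕ} {f : M → CMu A} {σ : Node → M} (hs : s ∈ T.dom)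
    (hf : ∀ t ∈ T.children s, ∀ r, t ∈ (f r).sem T V ↔ σ t = r) (q : M) (hc : c ≤ N) :
    s ∈ (truncCount N f q c).sem T V ↔ min ((T.children s).filter (σ · = q)).card N = c := by
  have hnot : ∀ t ∈ T.children s,
      t ∈ (not (bigOr (Finset.univ.erase q) f)).sem T V ↔ σ t = q := fun t ht => by
    simp only [mem_not (UTree.mem_dom_of_mem_children ht), mem_bigOr, Finset.mem_erase,
      Finset.mem_univ, and_true, hf t ht, not_exists, not_and]
    exact ⟨fun h => by_contra fun hne => h _ hne rfl, fun h r hr h' => hr (h'.symm.trans h)⟩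
  have hk : ∀ k, s ∈ (if k < c then CMu.diaGe k (f q) else
      CMu.not (.diaGe k (.not (bigOr (Finset.univ.erase q) f)))).sem T V ↔
        (k < c ↔ k < ((T.children s).filter (σ · = q)).card) := fun k => by
    split_ifs with h
    · rw [mem_diaGe hs fun t ht => hf t ht q, iff_true_left h]
    · rw [mem_not hs, mem_diaGe hs hnot, iff_false_left h]
  rw [truncCount, mem_bigAnd hs]
  simp only [hk, Finset.mem_range]
  constructor
  · intro h
    have := h (min c ((T.children s).filter (σ · = q)).card)
    omega
  · intro h k hkN
    omega

variable [CommMonoid M] [Fintype A]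

/-- If `f r` defines the nodes of state `r` in the run of `δ`, so does this formula for `q`; here
`N` is a threshold beyond which the powers in `M` are constant. -/
noncomputable def step (δ : A → M → M) (N : ℕ) (f : M → CMu A) (q : M) : CMu A :=
  bigOr {p : A × (M → Fin (N + 1)) | δ p.1 (∏ r, r ^ (p.2 r : ℕ)) = q} fun p =>
    and (.lab p.1) (bigAnd Finset.univ fun r => truncCount N f r (p.2 r))

theorem mem_step {δ : A → M → M} {N : ℕ} {f : M → CMu A} (hN : ∀ m : M, m ^ (N + 1) = m ^ N)
    (hs : s ∈ T.dom) (hf : ∀ t ∈ T.children s, ∀ r, t ∈ (f r).sem T V ↔ T.run δ t = r) (q : M) :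
    s ∈ (step δ N f q).sem T V ↔ T.run δ s = q := by
  have hcount : ∀ p : A × (M → Fin (N + 1)),
      s ∈ (and (.lab p.1) (bigAnd Finset.univ fun r => truncCount N f r (p.2 r))).sem T V ↔
        T.label s = p.1 ∧
          ∀ r, min ((T.children s).filter (T.run δ · = r)).card N = p.2 r := fun p => by
    rw [mem_and hs, mem_bigAnd hs]
    simp only [mem_truncCount hs hf _ (Fin.is_le _), Finset.mem_univ, true_imp_iff, sem,
      Set.mem_ofPred_eq, hs, true_and]
  simp only [step, mem_bigOr, hcount, Finset.mem_filter_univ]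
  rw [UTree.run_eq, prod_eq_prod_pow_min_card hN]
  constructor
  · rintro ⟨p, hp, hlab, hmin⟩
    simp only [hlab, hmin, hp]
  · intro h
    exact ⟨(T.label s, fun r => ⟨_, Nat.lt_succ_of_le (min_le_right _ N)⟩), h, rfl, fun r => rfl⟩

theorem HasPolarity.step {δ : A → M → M} {N : ℕ} {f : M → CMu A}
    (hf : ∀ r, HasPolarity (f r) true) (q : M) : HasPolarity (step δ N f q) true := by
  refine .bigOr fun p _ => .and (.lab _) (.bigAnd fun r _ => .bigAnd fun k _ => ?_)
  split_ifs
  · exact (hf r).diaGe k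
  · exact .not (.diaGe k (.not (.bigOr fun r _ => hf r)))

/-- Solves the equations `X q = step δ N X q`, one for each state `q ∉ B`, by nesting single fixed
points; the states in `B` are left as variables. -/
noncomputable def solution (δ : A → M → M) (N : ℕ) (X : M → ℕ) (B : Finset M) (q : M) : CMu A :=
  if _ : q ∈ B then .var (X q) else .mu (X q) (step δ N (fun r => solution δ N X (insert q B) r) q)
termination_by Bᶜ.card
decreasing_by exact Finset.card_lt_card (Finset.compl_ssubset_compl.2 (Finset.ssubset_insert ‹_›))

theorem hasPolarity_solution (δ : A → M → M) (N : ℕ) (X : M → ℕ) (B : Finset M) (q : M) :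
    HasPolarity (solution δ N X B q) true := by
  induction B, q using solution.induct with
  | case1 B q hq =>
    rw [solution, dif_pos hq]
    exact .var _
  | case2 B q hq ih =>
    rw [solution, dif_neg hq]
    exact .mu _ (.step ih q)

/-- Since trees are well-founded, the run is the only solution of the equations, so each single
fixed point defines the right state once the variables of the states in `B` do. -/
theorem mem_solution {δ : A → M → M} {N : ℕ} {X : M → ℕ} (hN : ∀ m : M, m ^ (N + 1) = m ^ N)
    (hX : X.Injective) (B : Finset M) (q : M) :
    ∀ V : ℕ → Set Node, ∀ s ∈ T.dom,
      (∀ r ∈ B, ∀ u ∈ T.subtree s, u ∈ V (X r) ↔ T.run δ u = r) →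
        (s ∈ (solution δ N X B q).sem T V ↔ T.run δ s = q) := by
  induction B, q using solution.induct with
  | case1 B q hq =>
    intro V s hs hV
    rw [solution, dif_pos hq]
    exact hV q hq s (UTree.self_mem_subtree hs)
  | case2 B q hq ih =>
    intro V
    rw [solution, dif_neg hq]
    set Z := (mu (X q) (step δ N (fun r => solution δ N X (insert q B) r) q)).sem T V
    have hunfold : Z = (step δ N (fun r => solution δ N X (insert q B) r) q).sem T
        (Function.update V (X q) Z) :=
      sem_mu_eq ((HasPolarity.step (hasPolarity_solution δ N X _) q).2 _)
    refine UTree.subtree_induction fun s hs ihs hV => ?_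
    rw [hunfold]
    refine mem_step hN hs (fun t ht r => ?_) q
    refine ih r _ t (UTree.mem_dom_of_mem_children ht) fun r' hr' u hu => ?_
    obtain rfl | hr' := Finset.mem_insert.1 hr'
    · rw [Function.update_self]
      refine ihs t ht u hu fun r hr w hw => ?_
      exact hV r hr w (UTree.subtree_subset_of_mem_children ht (UTree.subtree_trans hu hw))
    · rw [Function.update_of_ne (hX.ne (ne_of_mem_of_not_mem hr' hq))]
      exact hV r' hr' u (UTree.subtree_subset_of_mem_children ht hu)

end CMu

theorem Recognizable.exists_cmu {A : Type} [Finite A] {L : Set (UTree A)} (hL : Recognizable L) :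
    ∃ φ : CMu A, φ.WF ∧ ∀ (T : UTree A) (V : ℕ → Set Node), T ∈ L ↔ [] ∈ φ.sem T V := by
  classical
  obtain ⟨M, _, _, δ, F, hM, hF⟩ := hL
  have := Fintype.ofFinite A
  have := Fintype.ofFinite M
  obtain ⟨N, hN⟩ := hM.exists_threshold
  obtain ⟨X, hX⟩ := exists_injective_nat M
  refine ⟨.bigOr F.toFinset (CMu.solution δ N X ∅),
    (CMu.HasPolarity.bigOr fun q _ => CMu.hasPolarity_solution δ N X ∅ q).1, fun T V => ?_⟩
  have hsol : ∀ q, [] ∈ (CMu.solution δ N X ∅ q).sem T V ↔ T.run δ [] = q := fun q =>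
    CMu.mem_solution hN hX ∅ q V [] T.nil_mem (by simp)
  simp [hF, CMu.mem_bigOr, hsol]

/-! ### From the counting μ-calculus to MSO -/

theorem UTree.childR_iff_descR_covBy {A : Type} {T : UTree A} {s t : Node} :
    T.childR s t ↔
      T.descR s t ∧ s ≠ t ∧ ∀ u ∈ T.dom, T.descR s u ∧ T.descR u t → u = s ∨ u = t := by
  constructor
  · rintro ⟨hs, ht, i, rfl⟩
    refine ⟨⟨hs, ht, List.prefix_append s [i]⟩, by simp, fun u _ ⟨hsu, hut⟩ => ?_⟩
    obtain hu | hu := List.prefix_concat_iff.1 hut.2.2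
    · exact Or.inr hu
    · exact Or.inl (hu.eq_of_length_le hsu.2.2.length_le)
  · rintro ⟨⟨hs, ht, l, rfl⟩, hne, hcov⟩
    obtain - | ⟨i, l⟩ := l
    · exact absurd (List.append_nil s).symm hne
    · have hpre : s ++ [i] <+: s ++ i :: l := ⟨l, by simp⟩
      have hi := T.prefix_closed ht hpre
      obtain h | h := hcov _ hi ⟨⟨hs, hi, List.prefix_append s [i]⟩, hi, ht, hpre⟩
      · simp at h
      · exact ⟨hs, ht, i, h.symm⟩

theorem succ_le_ncard_iff {α : Type*} {S : Set α} (hS : S.Finite) {k : ℕ} :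
    k + 1 ≤ S.ncard ↔ ∃ a ∈ S, k ≤ (S \ {a}).ncard := by
  constructor
  · intro h
    obtain ⟨a, ha⟩ := Set.nonempty_of_ncard_ne_zero (Nat.ne_of_gt (Nat.lt_of_lt_of_le k.succ_pos h))
    exact ⟨a, ha, by have := Set.ncard_sdiff_singleton_add_one ha hS; omega⟩
  · rintro ⟨a, ha, h⟩
    have := Set.ncard_sdiff_singleton_add_one ha hS
    omega

theorem image_update_Ico {α : Type*} (f : ℕ → α) (x y : ℕ) (a : α) :
    Function.update f y a '' Set.Ico x y = f '' Set.Ico x y :=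
  Set.image_congr fun _ hz => Function.update_of_ne hz.2.ne _ _

theorem image_update_Ico_succ {α : Type*} (f : ℕ → α) {x y : ℕ} (hxy : x ≤ y) (a : α) :
    Function.update f y a '' Set.Ico x (y + 1) = insert a (f '' Set.Ico x y) := by
  rw [← Set.insert_Ico_right_eq_Ico_add_one hxy, Set.image_insert_eq, Function.update_self,
    image_update_Ico]

namespace MSOu

variable {A : Type} {T : UTree A} {v : ℕ → Node} {V : ℕ → Set Node} {φ ψ : MSOu A} {x y n : ℕ}

/-- Truth. -/
def top : MSOu A :=
  .eq 0 0

/-- Disjunction. -/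
def or (φ ψ : MSOu A) : MSOu A :=
  .not (.and (.not φ) (.not ψ))

/-- Implication. -/
def imp (φ ψ : MSOu A) : MSOu A :=
  .not (.and φ (.not ψ))

/-- Universal first-order quantification. -/
def allFO (n : ℕ) (φ : MSOu A) : MSOu A :=
  .not (.exFO n (.not φ))

/-- Universal second-order quantification. -/
def allSO (n : ℕ) (φ : MSOu A) : MSOu A :=
  .not (.exSO n (.not φ))

/-- Conjunction of a list of formulas. -/
def conj (l : List (MSOu A)) : MSOu A :=
  l.foldr .and top

/-- The formula `x ≺_ch y`; the variable `x + y + 1` is distinct from both `x` and `y`. -/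
def child (x y : ℕ) : MSOu A :=
  .and (.desc x y) (.and (.not (.eq x y)) (allFO (x + y + 1)
    (imp (.and (.desc x (x + y + 1)) (.desc (x + y + 1) y))
      (or (.eq (x + y + 1) x) (.eq (x + y + 1) y)))))

/-- The value of `y` differs from those of `x + 1, …, y - 1`. -/
def distinctFrom (x y : ℕ) : MSOu A :=
  conj ((List.Ico (x + 1) y).map fun z => .not (.eq y z))

/-- At least `k` children of `x` satisfy `ψ` and differ from the values of `x + 1, …, y - 1`. -/
def countGe (x : ℕ) (ψ : ℕ → MSOu A) : ℕ → ℕ → MSOu A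
  | 0, _ => top
  | k + 1, y =>
      .exFO y (.and (.and (child x y) (ψ y)) (.and (distinctFrom x y) (countGe x ψ k (y + 1))))

theorem sat_top : (top : MSOu A).Sat T v V :=
  rfl

theorem sat_or : (or φ ψ).Sat T v V ↔ φ.Sat T v V ∨ ψ.Sat T v V := by
  simp only [or, Sat]
  tauto

theorem sat_imp : (imp φ ψ).Sat T v V ↔ (φ.Sat T v V → ψ.Sat T v V) := by
  simp only [imp, Sat, not_and, not_not]

theorem sat_allFO :
    (allFO n φ).Sat T v V ↔ ∀ s ∈ T.dom, φ.Sat T (Function.update v n s) V := by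
  simp only [allFO, Sat, not_exists, not_and, not_not]

theorem sat_allSO :
    (allSO n φ).Sat T v V ↔ ∀ S : Set Node, S ⊆ T.dom → φ.Sat T v (Function.update V n S) := by
  simp only [allSO, Sat, not_exists, not_and, not_not]

theorem sat_conj {l : List (MSOu A)} : (conj l).Sat T v V ↔ ∀ φ ∈ l, φ.Sat T v V := by
  induction l with
  | nil => simpa [conj] using sat_top
  | cons φ l ih =>
    rw [List.forall_mem_cons, ← ih]
    rfl

theorem sat_child : (child x y).Sat T v V ↔ T.childR (v x) (v y) := by
  have hx : x ≠ x + y + 1 := by omega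
  have hy : y ≠ x + y + 1 := by omega
  simp only [child, sat_allFO, sat_imp, sat_or, Sat, Function.update_self,
    Function.update_of_ne hx, Function.update_of_ne hy]
  exact UTree.childR_iff_descR_covBy.symm

theorem sat_distinctFrom :
    (distinctFrom x y).Sat T v V ↔ v y ∉ v '' Set.Ico (x + 1) y := by
  simp only [distinctFrom, sat_conj, List.forall_mem_map, List.Ico.mem, Sat, Set.mem_image,
    Set.mem_Ico, not_exists, not_and]
  exact forall₂_congr fun z _ => not_congr eq_comm

theorem sat_countGe {C : Set Node} {ψ : ℕ → MSOu A} {k : ℕ} (hxy : x < y)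
    (hψ : ∀ (v : ℕ → Node) (y : ℕ), v y ∈ T.dom → ((ψ y).Sat T v V ↔ v y ∈ C)) :
    (countGe x ψ k y).Sat T v V ↔
      k ≤ ({t | T.childR (v x) t ∧ t ∈ C} \ v '' Set.Ico (x + 1) y).ncard := by
  induction k generalizing v y with
  | zero => simp [countGe, sat_top]
  | succ k ih =>
    have hfin : ({t | T.childR (v x) t ∧ t ∈ C} \ v '' Set.Ico (x + 1) y).Finite :=
      T.dom.finite_toSet.subset fun t ht => ht.1.1.2.1
    have hbody : ∀ s ∈ T.dom,
        Sat T (Function.update v y s) V (.and (.and (child x y) (ψ y))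
          (.and (distinctFrom x y) (countGe x ψ k (y + 1)))) ↔
        ((T.childR (v x) s ∧ s ∈ C) ∧ s ∉ v '' Set.Ico (x + 1) y ∧
          k ≤ (({t | T.childR (v x) t ∧ t ∈ C} \ v '' Set.Ico (x + 1) y) \ {s}).ncard) := by
      intro s hs
      have hψs := hψ (Function.update v y s) y (by simpa using hs)
      rw [Sat, Sat, Sat, sat_child, hψs, sat_distinctFrom, ih (hxy.trans y.lt_succ_self),
        image_update_Ico, image_update_Ico_succ v hxy, Function.update_self,
        Function.update_of_ne hxy.ne, Set.sdiff_sdiff, Set.union_singleton]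
    rw [succ_le_ncard_iff hfin, countGe, Sat]
    constructor
    · rintro ⟨s, hs, h⟩
      obtain ⟨hC, hI, hk⟩ := (hbody s hs).1 h
      exact ⟨s, ⟨hC, hI⟩, hk⟩
    · rintro ⟨s, ⟨hC, hI⟩, hk⟩
      exact ⟨s, hC.1.2.1, (hbody s hC.1.2.1).2 ⟨hC, hI, hk⟩⟩

end MSOu

/-- The standard translation: `tr φ x` says that `φ` holds at the node `x`. -/
def CMu.tr {A : Type} : CMu A → ℕ → MSOu A
  | .lab a, x => .lab a x
  | .var n, x => .mem n x
  | .or φ ψ, x => .or (tr φ x) (tr ψ x)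
  | .not φ, x => .not (tr φ x)
  | .dia φ, x => .exFO (x + 1) (.and (.child x (x + 1)) (tr φ (x + 1)))
  | .diaGe k φ, x => .countGe x (tr φ) (k + 1) (x + 1)
  | .mu n φ, x => .allSO n (.imp (.allFO (x + 1) (.imp (tr φ (x + 1)) (.mem n (x + 1))))
      (.mem n x))

theorem CMu.sat_tr {A : Type} {T : UTree A} {φ : CMu A} {V V' : ℕ → Set Node} {v : ℕ → Node}
    {x : ℕ} (hV : ∀ n, ∀ s ∈ T.dom, s ∈ V n ↔ s ∈ V' n) (hx : v x ∈ T.dom) :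
    (φ.tr x).Sat T v V' ↔ v x ∈ φ.sem T V := by
  induction φ generalizing V V' v x with
  | lab a => rfl
  | var n => exact (hV n _ hx).symm
  | or φ ψ ihφ ihψ => rw [tr, MSOu.sat_or, ihφ hV hx, ihψ hV hx, sem, Set.mem_union]
  | not φ ih => rw [tr, MSOu.Sat, ih hV hx, CMu.mem_not hx]
  | dia φ ih =>
    have hbody : ∀ s ∈ T.dom, MSOu.Sat T (Function.update v (x + 1) s) V'
        (.and (.child x (x + 1)) (φ.tr (x + 1))) ↔ T.childR (v x) s ∧ s ∈ φ.sem T V := by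
      intro s hs
      have hφ := ih (v := Function.update v (x + 1) s) (x := x + 1) hV (by simpa using hs)
      rw [MSOu.Sat, MSOu.sat_child, hφ, Function.update_self,
        Function.update_of_ne x.lt_succ_self.ne]
    constructor
    · rintro ⟨s, hs, h⟩
      exact ⟨hx, s, (hbody s hs).1 h⟩
    · rintro ⟨-, s, h⟩
      exact ⟨s, h.1.2.1, (hbody s h.1.2.1).2 h⟩
  | diaGe k φ ih =>
    rw [tr, MSOu.sat_countGe (Nat.lt_succ_self x) fun w y hy => ih hV hy, Set.Ico_self,
      Set.image_empty, Set.sdiff_empty]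
    exact (and_iff_right hx).symm
  | mu n φ ih =>
    have hbody : ∀ P S : Set Node, (∀ s ∈ T.dom, s ∈ P ↔ s ∈ S) → ∀ s ∈ T.dom,
        ((φ.tr (x + 1)).Sat T (Function.update v (x + 1) s) (Function.update V' n S) ↔
          s ∈ φ.sem T (Function.update V n P)) := by
      intro P S hPS s hs
      rw [ih (V := Function.update V n P) ?_ (by simpa using hs), Function.update_self]
      intro m u hu
      obtain rfl | hm := eq_or_ne m n
      · simpa using hPS u hu
      · simpa [hm] using hV m u hu
    -- Set quantifiers of MSO range over sets of nodes of `T`, the fixed point over all sets.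
    simp only [tr, MSOu.sat_allSO, MSOu.sat_imp, MSOu.sat_allFO, MSOu.Sat, Function.update_self]
    constructor
    · intro h P hP
      refine (h (P ∩ T.dom) Set.inter_subset_right fun s hs hφ => ⟨hP ?_, hs⟩).1
      exact (hbody P _ (fun u hu => (and_iff_left hu).symm) s hs).1 hφ
    · intro h S _ hclosed
      refine (h (S ∪ (T.dom : Set Node)ᶜ) fun s hs => ?_).resolve_right (not_not_intro hx)
      by_cases hdom : s ∈ T.dom
      · refine Or.inl (hclosed s hdom ((hbody _ S (fun u hu => ?_) s hdom).2 hs))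
        exact or_iff_left (not_not_intro hu)
      · exact Or.inr hdom

theorem CMu.exists_mso {A : Type} {φ : CMu A} {L : Set (UTree A)}
    (hφ : ∀ (T : UTree A) (V : ℕ → Set Node), T ∈ L ↔ [] ∈ φ.sem T V) :
    ∃ ψ : MSOu A, ψ.DefinesB L := by
  refine ⟨.exFO 0 (.and (.allFO 1 (.desc 0 1)) (φ.tr 0)), fun T v V => ?_⟩
  have hbody : ∀ s ∈ T.dom, (MSOu.and (.allFO 1 (.desc 0 1)) (φ.tr 0)).Sat T
      (Function.update v 0 s) V ↔ (∀ t ∈ T.dom, T.descR s t) ∧ s ∈ φ.sem T V := by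
    intro s hs
    rw [MSOu.Sat, sat_tr (fun _ _ _ => Iff.rfl) (by simpa using hs), Function.update_self]
    simp [MSOu.sat_allFO, MSOu.Sat]
  rw [hφ T V]
  constructor
  · intro h
    refine ⟨[], T.nil_mem, (hbody [] T.nil_mem).2 ⟨fun t ht => ?_, h⟩⟩
    exact ⟨T.nil_mem, ht, List.nil_prefix⟩
  · rintro ⟨s, hs, h⟩
    obtain ⟨hroot, h⟩ := (hbody s hs).1 h
    rwa [List.prefix_nil.1 (hroot [] T.nil_mem).2.2] at h

/-- Over unordered unranked Σ-trees, MSO and the counting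
μ-calculus `C_μ[≺_ch]` have the same expressive power for Boolean queries. -/
theorem mso_iff_counting_mu (A : Type) [Fintype A] (L : Set (UTree A)) :
    (∃ φ : MSOu A, φ.DefinesB L) ↔
      ∃ φ : CMu A, φ.WF ∧
        ∀ (T : UTree A) (V : ℕ → Set Node),
          T ∈ L ↔ ([] : Node) ∈ φ.sem T V := by
  constructor
  · rintro ⟨φ, hφ⟩
    exact hφ.recognizable.exists_cmu
  · rintro ⟨φ, -, hφ⟩
    exact φ.exists_mso hφ

end UnrankedTrees
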